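/- arXiv:cs/0605071 — 2 statements merged into one kernel-verified Lean document; each statement's English description precedes it below -/
import Mathlib

section
/- (The Gaussian weak interference channel is type C degraded.) Let a, b be real with |b| ≤ 1, and let Z₁ ~ N(0,1), Z' ~ N(0,1−b²), Z₂ ~ N(0,1) be Gaussian random variables with Z₁ and Z' independent. Then bZ₁ + Z' has the standard Gaussian distribution N(0,1); consequently, for all real x₁, x₂, the distribution of bx₁ + x₂ + Z₂ (the conditional output law of Y₂ in the Gaussian interference channel given inputs (x₁,x₂)) coincides with the distribution of b·(x₁ + a x₂ + Z₁) + (1 − ab)x₂ + Z', i.e. the conditional law of Y₂ given (X₁,X₂) = (x₁,x₂) is obtained from the conditional law of Y₁ = x₁ + a x₂ + Z₁ by applying a transition kernel depending only on (x₂, y₁). -/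
open MeasureTheory ProbabilityTheory

noncomputable section

/-! Given `(x₁, x₂)`, rescaling `Y₁` by `b` and adding `(1 - ab)x₂` turns its signal part into that
of `Y₂`, since `b(x₁ + ax₂) + (1 - ab)x₂ = bx₁ + x₂`. Only the noise remains to be matched: `bZ₁`
has variance `b² ≤ 1`, and the independent `Z'` supplies exactly the missing variance `1 - b²`. -/

section Law

variable {Ω 𝓧 : Type*} {mΩ : MeasurableSpace Ω} {m𝓧 : MeasurableSpace 𝓧} {P : Measure Ω}

-- A map that is not a.e. measurable has pushforward `0`, so measurability follows from `ν ≠ 0`.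
theorem hasLaw_of_map_eq {X : Ω → 𝓧} {ν : Measure 𝓧} [NeZero ν] (h : P.map X = ν) :
    HasLaw X ν P where
  aemeasurable := .of_map_ne_zero (h ▸ NeZero.ne ν)
  map_eq := h

end Law

section Gaussian

open scoped NNReal

variable {Ω : Type*} {mΩ : MeasurableSpace Ω} {P : Measure Ω} {X Y : Ω → ℝ} {m₁ m₂ : ℝ}

theorem hasLaw_const_mul_add_gaussianReal_of_indepFun {v₁ v₂ : ℝ≥0}
    (hX : HasLaw X (gaussianReal m₁ v₁) P) (hY : HasLaw Y (gaussianReal m₂ v₂) P)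
    (hXY : IndepFun X Y P) (c : ℝ) :
    HasLaw (fun ω ↦ c * X ω + Y ω)
      (gaussianReal (c * m₁ + m₂) (.mk (c ^ 2) (sq_nonneg c) * v₁ + v₂)) P := by
  have hcXY : IndepFun (fun ω ↦ c * X ω) Y P :=
    hXY.comp (measurable_const_mul c) measurable_id
  rw [← gaussianReal_conv_gaussianReal]
  exact hcXY.hasLaw_fun_add (gaussianReal_const_mul hX c) hY

theorem hasLaw_const_mul_add_gaussianReal_of_sq_mul_le {v w : ℝ≥0} {c : ℝ}
    (hcv : c ^ 2 * v ≤ w) (hX : HasLaw X (gaussianReal m₁ v) P)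
    (hY : HasLaw Y (gaussianReal m₂ (w - c ^ 2 * v : ℝ).toNNReal) P) (hXY : IndepFun X Y P) :
    HasLaw (fun ω ↦ c * X ω + Y ω) (gaussianReal (c * m₁ + m₂) w) P := by
  have variance_eq : .mk (c ^ 2) (sq_nonneg c) * v + (w - c ^ 2 * v : ℝ).toNNReal = w := by
    ext
    simp [Real.coe_toNNReal _ (sub_nonneg.2 hcv)]
  simpa only [variance_eq] using hasLaw_const_mul_add_gaussianReal_of_indepFun hX hY hXY c

end Gaussian

section InterferenceChannel

variable {Ω Ω' R : Type*} {mΩ : MeasurableSpace Ω} {mΩ' : MeasurableSpace Ω'}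
  [CommRing R] [MeasurableSpace R] [MeasurableAdd R] {P : Measure Ω} {P' : Measure Ω'}

theorem identDistrib_interference_output {b : R} {Z₁ Z' : Ω → R} {Z₂ : Ω' → R}
    (hZ : IdentDistrib Z₂ (fun ω ↦ b * Z₁ ω + Z' ω) P' P) (a x₁ x₂ : R) :
    IdentDistrib (fun ω ↦ b * x₁ + x₂ + Z₂ ω)
      (fun ω ↦ b * (x₁ + a * x₂ + Z₁ ω) + (1 - a * b) * x₂ + Z' ω) P' P := by
  have output_eq : ∀ ω, b * (x₁ + a * x₂ + Z₁ ω) + (1 - a * b) * x₂ + Z' ω =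
      b * x₁ + x₂ + (b * Z₁ ω + Z' ω) := fun ω ↦ by ring
  simp only [output_eq]
  exact hZ.comp (measurable_const_add (b * x₁ + x₂))

end InterferenceChannel

/-- **The Gaussian weak interference channel is (type C) stochastically degraded.**
If `|b| ≤ 1`, `Z₁ ~ N(0,1)` and `Z' ~ N(0,1−b²)` are independent and `Z₂ ~ N(0,1)`,
then `bZ₁ + Z'` is standard Gaussian, and for all inputs `(x₁,x₂)` the conditional
output law of `Y₂ = bx₁ + x₂ + Z₂` coincides with the law of
`b(x₁ + a x₂ + Z₁) + (1 − ab)x₂ + Z'`, i.e. the conditional law of `Y₂` is obtained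
from the conditional law of `Y₁ = x₁ + a x₂ + Z₁` by a transition kernel depending
only on `(x₂, y₁)`. -/
theorem gaussian_weak_IFC_degraded {Ω Ω₂ : Type*} [MeasurableSpace Ω] [MeasurableSpace Ω₂]
    (μ : Measure Ω) [IsProbabilityMeasure μ] (μ₂ : Measure Ω₂) [IsProbabilityMeasure μ₂]
    (a b : ℝ) (hb : |b| ≤ 1)
    (Z1 Z' : Ω → ℝ) (Z2 : Ω₂ → ℝ)
    (hZ1meas : Measurable Z1) (hZ'meas : Measurable Z')
    (hZ1 : Measure.map Z1 μ = gaussianReal 0 1)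
    (hZ' : Measure.map Z' μ = gaussianReal 0 (Real.toNNReal (1 - b ^ 2)))
    (hZ2 : Measure.map Z2 μ₂ = gaussianReal 0 1)
    (hindep : IndepFun Z1 Z' μ) :
    Measure.map (fun ω => b * Z1 ω + Z' ω) μ = gaussianReal 0 1 ∧
    ∀ x1 x2 : ℝ,
      Measure.map (fun ω => b * x1 + x2 + Z2 ω) μ₂
        = Measure.map (fun ω => b * (x1 + a * x2 + Z1 ω) + (1 - a * b) * x2 + Z' ω) μ := by
  have noise_law : HasLaw (fun ω ↦ b * Z1 ω + Z' ω) (gaussianReal 0 1) μ := by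
    simpa using hasLaw_const_mul_add_gaussianReal_of_sq_mul_le (w := 1)
      (by simpa using hb) ⟨hZ1meas.aemeasurable, hZ1⟩
      ⟨hZ'meas.aemeasurable, by simpa using hZ'⟩ hindep
  have noise_identDistrib : IdentDistrib Z2 (fun ω ↦ b * Z1 ω + Z' ω) μ₂ μ :=
    (hasLaw_of_map_eq hZ2).identDistrib noise_law
  exact ⟨noise_law.map_eq, fun x1 x2 ↦
    (identDistrib_interference_output noise_identDistrib a x1 x2).map_eq⟩
end
end

section
/- Let U be a random element, let X₁, X₂ be zero-mean real random variables with E[X₁²] ≤ P₁ and E[X₂²] ≤ P₂, let Z₁ ~ N(0,1) be independent of (U,X₁,X₂), and suppose all differential entropies involved are well defined and finite. If α ∈ [0,1] satisfies h(X₁ + Z₁ | U, X₂) = ½ log(2πe(1 + αP₁)), then E[X₁X₂] ≤ √((1−α)P₁P₂). -/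
open MeasureTheory ProbabilityTheory

noncomputable section

/-- Differential entropy (base 2) of a measure on `ℝ`, computed from its
Radon–Nikodym density with respect to Lebesgue measure:
`h(ν) = -∫ f log₂ f` where `f = dν/dx`. -/
def dH1 (ν : Measure ℝ) : ℝ :=
  -∫ x, (ν.rnDeriv volume x).toReal * Real.logb 2 (ν.rnDeriv volume x).toReal

/-- Conditional differential entropy (base 2) `h(Y | X)`: the expectation over `X`
of the differential entropy of the conditional law of `Y` given `X`. -/
def condDiffEnt {Ω β : Type*} [MeasurableSpace Ω] [MeasurableSpace β]
    (μ : Measure Ω) [IsFiniteMeasure μ] (Y : Ω → ℝ) (X : Ω → β) : ℝ :=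
  ∫ ω, dH1 (condDistrib Y X μ (X ω)) ∂μ

/-!
For every `c`, comparing the conditional law of `X₁ + Z₁` given `(U, X₂)` with the Gaussian
`N(c X₂, 1 + αP₁)` in Gibbs' inequality shows that conditional entropy at least
`½ log(2πe(1 + αP₁))` forces `E[(X₁ + Z₁ - c X₂)²] ≥ 1 + αP₁`, that is
`E[(X₁ - c X₂)²] ≥ αP₁`. A quadratic polynomial in `c` that stays above `αP₁` has a
nonpositive discriminant, and this is the strengthened Cauchy–Schwarz inequality
`E[X₁X₂]² ≤ (E[X₁²] - αP₁) E[X₂²]`.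
-/

open scoped NNReal Real

section Gibbs

variable {α : Type*} [MeasurableSpace α] {ν γ κ : Measure α}

lemma llr_ae_eq_llr_add_llr [SigmaFinite ν] [SigmaFinite γ] [SigmaFinite κ]
    (hνγ : ν ≪ γ) (hγκ : γ ≪ κ) : llr ν κ =ᵐ[ν] llr ν γ + llr γ κ := by
  filter_upwards [(hνγ.trans hγκ).ae_le (Measure.rnDeriv_mul_rnDeriv (κ := κ) hνγ),
    Measure.rnDeriv_pos hνγ, hνγ.ae_le (Measure.rnDeriv_ne_top ν γ),
    hνγ.ae_le (Measure.rnDeriv_pos hγκ), (hνγ.trans hγκ).ae_le (Measure.rnDeriv_ne_top γ κ)]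
    with x h_chain h_pos_νγ h_top_νγ h_pos_γκ h_top_γκ
  simp only [llr, Pi.add_apply, ← h_chain, Pi.mul_apply, ENNReal.toReal_mul]
  exact Real.log_mul (ENNReal.toReal_ne_zero.2 ⟨h_pos_νγ.ne', h_top_νγ⟩)
    (ENNReal.toReal_ne_zero.2 ⟨h_pos_γκ.ne', h_top_γκ⟩)

lemma integral_llr_le_integral_llr_self [IsProbabilityMeasure ν] [IsProbabilityMeasure γ]
    [SigmaFinite κ] (hνγ : ν ≪ γ) (hγκ : γ ≪ κ) (hν : Integrable (llr ν κ) ν)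
    (hγ : Integrable (llr γ κ) ν) : ∫ x, llr γ κ x ∂ν ≤ ∫ x, llr ν κ x ∂ν := by
  have h_sub : llr ν γ =ᵐ[ν] llr ν κ - llr γ κ := by
    filter_upwards [llr_ae_eq_llr_add_llr hνγ hγκ] with x hx
    simp [hx]
  have h_gibbs := InformationTheory.integral_llr_add_sub_measure_univ_nonneg hνγ
    ((hν.sub hγ).congr h_sub.symm)
  rw [integral_congr_ae h_sub, integral_sub' hν hγ] at h_gibbs
  simpa using h_gibbs

end Gibbs

lemma llr_gaussianReal_volume (m : ℝ) {v : ℝ≥0} (hv : v ≠ 0) :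
    llr (gaussianReal m v) volume =ᵐ[volume]
      fun y ↦ -((Real.log (2 * π * v) + (y - m) ^ 2 / v) / 2) := by
  filter_upwards [rnDeriv_gaussianReal m v] with y hy
  rw [llr, hy, toReal_gaussianPDF, gaussianPDFReal,
    Real.log_mul (by positivity) (Real.exp_pos _).ne', Real.log_inv, Real.log_sqrt (by positivity),
    Real.log_exp]
  field_simp
  ring

section DifferentialEntropy

variable {ν : Measure ℝ}

lemma dH1_eq_neg_integral_llr_div_log_two [SigmaFinite ν] (hν : ν ≪ volume) :
    dH1 ν = -(∫ x, llr ν volume x ∂ν) / Real.log 2 := by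
  simp only [dH1, Real.logb, ← mul_div_assoc, integral_div, integral_rnDeriv_mul_log hν, neg_div]

lemma dH1_le_gaussian [IsProbabilityMeasure ν] (hν : ν ≪ volume) {m : ℝ} {v : ℝ≥0}
    (hv : 1 ≤ 2 * π * v) (h_sq : Integrable (fun y ↦ (y - m) ^ 2) ν) :
    dH1 ν ≤ (Real.log (2 * π * v) + (∫ y, (y - m) ^ 2 ∂ν) / v) / (2 * Real.log 2) := by
  have hv0 : v ≠ 0 := by rintro rfl; norm_num at hv
  have h_cross : llr (gaussianReal m v) volume =ᵐ[ν]
      fun y ↦ -((Real.log (2 * π * v) + (y - m) ^ 2 / v) / 2) :=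
    hν.ae_le (llr_gaussianReal_volume m hv0)
  have h_const : Integrable (fun _ ↦ Real.log (2 * π * v)) ν := integrable_const _
  have h_cross_int : Integrable (llr (gaussianReal m v) volume) ν :=
    ((h_const.add (h_sq.div_const _)).div_const 2).neg.congr h_cross.symm
  have h_cross_eq : ∫ y, llr (gaussianReal m v) volume y ∂ν
      = -((Real.log (2 * π * v) + (∫ y, (y - m) ^ 2 ∂ν) / v) / 2) := by
    rw [integral_congr_ae h_cross, integral_neg, integral_div,
      integral_add h_const (h_sq.div_const _), integral_div, integral_const, probReal_univ,
      one_smul]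
  rw [dH1_eq_neg_integral_llr_div_log_two hν, ← div_div]
  gcongr
  by_cases h_int : Integrable (llr ν volume) ν
  · have := integral_llr_le_integral_llr_self
      (hν.trans (gaussianReal_absolutelyContinuous' m hv0))
      (gaussianReal_absolutelyContinuous m hv0) h_int h_cross_int
    linarith
  · -- Here `h(ν) = -∞` but `dH1 ν = 0`; `1 ≤ 2πv` keeps the bound true.
    have h_log := Real.log_nonneg hv
    rw [integral_undef h_int, neg_zero]
    positivity

end DifferentialEntropy

section ConditionalLaw

variable {Ω β M : Type*} [MeasurableSpace Ω] [MeasurableSpace β] [MeasurableSpace M]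
  [StandardBorelSpace M] {μ : Measure Ω} [IsFiniteMeasure μ] {W : Ω → β} {X Y Z : Ω → M}

lemma condDistrib_prodMk_ae_eq_prod_const {N : Type*} [MeasurableSpace N] [StandardBorelSpace N]
    [Nonempty M] [Nonempty N] {Z : Ω → N} (hW : AEMeasurable W μ) (hX : AEMeasurable X μ)
    (hZ : AEMeasurable Z μ)
    (hindep : IndepFun (fun ω ↦ (W ω, X ω)) Z μ) :
    condDistrib (fun ω ↦ (X ω, Z ω)) W μ =ᵐ[μ.map W]
      condDistrib X W μ ×ₖ Kernel.const β (μ.map Z) := by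
  refine condDistrib_ae_eq_of_measure_eq_compProd W (hX.prodMk hZ) ?_
  refine Measure.ext_prod₃ fun {s t u} hs ht hu ↦ ?_
  have h_map : μ.map (fun ω ↦ ((W ω, X ω), Z ω)) = (μ.map fun ω ↦ (W ω, X ω)).prod (μ.map Z) :=
    (indepFun_iff_map_prod_eq_prod_map_map (hW.prodMk hX) hZ).1 hindep
  calc μ.map (fun ω ↦ (W ω, X ω, Z ω)) (s ×ˢ t ×ˢ u)
    _ = μ.map (fun ω ↦ ((W ω, X ω), Z ω)) ((s ×ˢ t) ×ˢ u) := by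
      rw [Measure.map_apply_of_aemeasurable (hW.prodMk (hX.prodMk hZ)) (hs.prod (ht.prod hu)),
        Measure.map_apply_of_aemeasurable ((hW.prodMk hX).prodMk hZ) ((hs.prod ht).prod hu)]
      simp only [Set.mk_preimage_prod, Set.inter_assoc]
    _ = (∫⁻ w in s, condDistrib X W μ w t ∂μ.map W) * μ.map Z u := by
      rw [h_map, Measure.prod_prod, ← compProd_map_condDistrib hX,
        Measure.compProd_apply_prod hs ht]
    _ = (μ.map W ⊗ₘ (condDistrib X W μ ×ₖ Kernel.const β (μ.map Z))) (s ×ˢ t ×ˢ u) := by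
      rw [Measure.compProd_apply_prod hs (ht.prod hu),
        ← lintegral_mul_const _ (Kernel.measurable_coe _ ht)]
      simp only [Kernel.prod_apply_prod, Kernel.const_apply]

lemma condDistrib_add_ae_eq_conv [AddMonoid M] [MeasurableAdd₂ M] (hW : AEMeasurable W μ)
    (hX : AEMeasurable X μ) (hZ : AEMeasurable Z μ)
    (hindep : IndepFun (fun ω ↦ (W ω, X ω)) Z μ) :
    ∀ᵐ ω ∂μ, condDistrib (fun ω ↦ X ω + Z ω) W μ (W ω)
      = condDistrib X W μ (W ω) ∗ μ.map Z := by
  have h_add : Measurable fun p : M × M ↦ p.1 + p.2 := by fun_prop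
  filter_upwards [ae_of_ae_map hW (condDistrib_comp W (hX.prodMk hZ) h_add),
    ae_of_ae_map hW (condDistrib_prodMk_ae_eq_prod_const hW hX hZ hindep)] with ω h_sum h_pair
  rw [Function.comp_def] at h_sum
  rw [h_sum, Kernel.map_apply _ h_add, h_pair, Kernel.prod_apply, Kernel.const_apply]
  rfl

lemma condDistrib_add_absolutelyContinuous [AddGroup M] [MeasurableAdd₂ M] {ρ : Measure M}
    [ρ.IsAddLeftInvariant] (hW : AEMeasurable W μ) (hX : AEMeasurable X μ)
    (hZ : AEMeasurable Z μ) (hindep : IndepFun (fun ω ↦ (W ω, X ω)) Z μ) (hZρ : μ.map Z ≪ ρ) :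
    ∀ᵐ ω ∂μ, condDistrib (fun ω ↦ X ω + Z ω) W μ (W ω) ≪ ρ := by
  filter_upwards [condDistrib_add_ae_eq_conv hW hX hZ hindep] with ω hω
  exact hω ▸ Measure.conv_absolutelyContinuous hZρ

lemma integral_integral_condDistrib {E : Type*} [NormedAddCommGroup E] [NormedSpace ℝ E]
    [CompleteSpace E] [Nonempty M] (hW : Measurable W) (hY : AEMeasurable Y μ) {f : β × M → E}
    (hf : Integrable f (μ.map fun ω ↦ (W ω, Y ω))) :
    ∫ ω, ∫ y, f (W ω, y) ∂condDistrib Y W μ (W ω) ∂μ = ∫ ω, f (W ω, Y ω) ∂μ :=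
  (integral_congr_ae (condExp_prod_ae_eq_integral_condDistrib' hW hY hf).symm).trans
    (integral_condExp hW.comap_le)

end ConditionalLaw

section SecondMoments

variable {Ω : Type*} [MeasurableSpace Ω] {μ : Measure Ω} {X Y : Ω → ℝ}

lemma integral_add_sq_of_indepFun (hX : MemLp X 2 μ) (hY : MemLp Y 2 μ)
    (hindep : IndepFun X Y μ) (hY_mean : ∫ ω, Y ω ∂μ = 0) :
    ∫ ω, (X ω + Y ω) ^ 2 ∂μ = ∫ ω, X ω ^ 2 ∂μ + ∫ ω, Y ω ^ 2 ∂μ := by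
  have hXY : Integrable (fun ω ↦ X ω * Y ω) μ := hX.integrable_mul hY
  have h_cross : ∫ ω, X ω * Y ω ∂μ = 0 := by
    rw [hindep.integral_fun_mul_eq_mul_integral hX.1 hY.1, hY_mean, mul_zero]
  have h_sum : Integrable (fun ω ↦ X ω ^ 2 + 2 * (X ω * Y ω)) μ :=
    hX.integrable_sq.add (hXY.const_mul 2)
  simp_rw [add_sq, mul_assoc]
  rw [integral_add h_sum hY.integrable_sq,
    integral_add hX.integrable_sq (hXY.const_mul 2), integral_const_mul, h_cross, mul_zero,
    add_zero]

lemma integral_sub_const_mul_sq (hX : MemLp X 2 μ) (hY : MemLp Y 2 μ) (c : ℝ) :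
    ∫ ω, (X ω - c * Y ω) ^ 2 ∂μ
      = ∫ ω, X ω ^ 2 ∂μ - 2 * c * ∫ ω, X ω * Y ω ∂μ + c ^ 2 * ∫ ω, Y ω ^ 2 ∂μ := by
  have hXY : Integrable (fun ω ↦ X ω * Y ω) μ := hX.integrable_mul hY
  have h_expand (ω : Ω) : (X ω - c * Y ω) ^ 2
      = X ω ^ 2 - 2 * c * (X ω * Y ω) + c ^ 2 * Y ω ^ 2 := by ring
  have h_diff : Integrable (fun ω ↦ X ω ^ 2 - 2 * c * (X ω * Y ω)) μ :=
    hX.integrable_sq.sub (hXY.const_mul _)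
  simp_rw [h_expand]
  rw [integral_add h_diff (hY.integrable_sq.const_mul _),
    integral_sub hX.integrable_sq (hXY.const_mul _), integral_const_mul, integral_const_mul]

lemma sq_integral_mul_le_of_forall_le_integral_sub_sq (hX : MemLp X 2 μ) (hY : MemLp Y 2 μ)
    {k : ℝ} (hk : ∀ c : ℝ, k ≤ ∫ ω, (X ω - c * Y ω) ^ 2 ∂μ) :
    (∫ ω, X ω * Y ω ∂μ) ^ 2 ≤ (∫ ω, X ω ^ 2 ∂μ - k) * ∫ ω, Y ω ^ 2 ∂μ := by
  have h_discrim := discrim_le_zero (a := ∫ ω, Y ω ^ 2 ∂μ) (b := -2 * ∫ ω, X ω * Y ω ∂μ)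
    (c := ∫ ω, X ω ^ 2 ∂μ - k) fun c ↦ by
      have := hk c
      rw [integral_sub_const_mul_sq hX hY] at this
      linarith
  rw [discrim] at h_discrim
  linarith

end SecondMoments

section Estimation

variable {Ω β : Type*} [MeasurableSpace Ω] [MeasurableSpace β] {μ : Measure Ω}
  [IsProbabilityMeasure μ] {W : Ω → β} {Y : Ω → ℝ} {g : β → ℝ} {v : ℝ≥0}

lemma condDiffEnt_le_gaussian (hW : Measurable W) (hY : AEMeasurable Y μ) (hg : Measurable g)
    (hYW : ∀ᵐ ω ∂μ, condDistrib Y W μ (W ω) ≪ volume)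
    (h_sq : MemLp (fun ω ↦ Y ω - g (W ω)) 2 μ) (hv : 1 ≤ 2 * π * v) :
    condDiffEnt μ Y W
      ≤ (Real.log (2 * π * v) + (∫ ω, (Y ω - g (W ω)) ^ 2 ∂μ) / v) / (2 * Real.log 2) := by
  let sqErr : β × ℝ → ℝ := fun p ↦ (p.2 - g p.1) ^ 2
  have h_err : Integrable sqErr (μ.map fun ω ↦ (W ω, Y ω)) :=
    (integrable_map_measure (by fun_prop) (by fun_prop)).2 h_sq.integrable_sq
  have h_condErr : Integrable (fun ω ↦ ∫ y, sqErr (W ω, y) ∂condDistrib Y W μ (W ω)) μ :=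
    h_err.integral_condDistrib hW.aemeasurable hY
  have h_tower : ∫ ω, ∫ y, sqErr (W ω, y) ∂condDistrib Y W μ (W ω) ∂μ
      = ∫ ω, (Y ω - g (W ω)) ^ 2 ∂μ :=
    integral_integral_condDistrib hW hY h_err
  have h_const : Integrable (fun _ ↦ Real.log (2 * π * v)) μ := integrable_const _
  have h_log := Real.log_nonneg hv
  by_cases h_int : Integrable (fun ω ↦ dH1 (condDistrib Y W μ (W ω))) μ
  · calc condDiffEnt μ Y W
      _ ≤ ∫ ω, (Real.log (2 * π * v)
            + (∫ y, sqErr (W ω, y) ∂condDistrib Y W μ (W ω)) / v) / (2 * Real.log 2) ∂μ := by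
        refine integral_mono_ae h_int ((h_const.add (h_condErr.div_const _)).div_const _) ?_
        filter_upwards [hYW, h_err.condDistrib_ae hW.aemeasurable hY] with ω h_ac h_sqω
        exact dH1_le_gaussian (m := g (W ω)) h_ac hv h_sqω
      _ = (Real.log (2 * π * v) + (∫ ω, (Y ω - g (W ω)) ^ 2 ∂μ) / v) / (2 * Real.log 2) := by
        rw [integral_div, integral_add h_const (h_condErr.div_const _), integral_div, h_tower,
          integral_const, probReal_univ, one_smul]
  · rw [condDiffEnt, integral_undef h_int]
    positivity

lemma le_integral_sub_sq_of_le_condDiffEnt (hW : Measurable W) (hY : AEMeasurable Y μ)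
    (hg : Measurable g) (hYW : ∀ᵐ ω ∂μ, condDistrib Y W μ (W ω) ≪ volume)
    (h_sq : MemLp (fun ω ↦ Y ω - g (W ω)) 2 μ) (hv : 1 ≤ 2 * π * v)
    (h_ent : 1 / 2 * Real.logb 2 (2 * π * Real.exp 1 * v) ≤ condDiffEnt μ Y W) :
    v ≤ ∫ ω, (Y ω - g (W ω)) ^ 2 ∂μ := by
  have hv0 : (0 : ℝ) < v := by
    by_contra! h
    nlinarith [Real.pi_pos]
  have h_logb : 1 / 2 * Real.logb 2 (2 * π * Real.exp 1 * v)
      = (Real.log (2 * π * v) + 1) / (2 * Real.log 2) := by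
    rw [Real.logb, mul_right_comm, Real.log_mul (by positivity) (Real.exp_pos 1).ne', Real.log_exp]
    ring
  have h_le := h_logb ▸ h_ent.trans (condDiffEnt_le_gaussian hW hY hg hYW h_sq hv)
  rw [div_le_div_iff_of_pos_right (by positivity), add_le_add_iff_left, one_le_div hv0] at h_le
  exact h_le

lemma le_integral_sub_sq_add_of_le_condDiffEnt_add {X Z : Ω → ℝ} (hW : Measurable W)
    (hX : AEMeasurable X μ) (hZ : AEMeasurable Z μ) (hg : Measurable g)
    (hindep : IndepFun (fun ω ↦ (W ω, X ω)) Z μ) (hZ_ac : μ.map Z ≪ volume)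
    (hX_sq : MemLp (fun ω ↦ X ω - g (W ω)) 2 μ) (hZ_sq : MemLp Z 2 μ)
    (hZ_mean : ∫ ω, Z ω ∂μ = 0) (hv : 1 ≤ 2 * π * v)
    (h_ent : 1 / 2 * Real.logb 2 (2 * π * Real.exp 1 * v)
      ≤ condDiffEnt μ (fun ω ↦ X ω + Z ω) W) :
    v ≤ ∫ ω, (X ω - g (W ω)) ^ 2 ∂μ + ∫ ω, Z ω ^ 2 ∂μ := by
  have h_err_indep : IndepFun (fun ω ↦ X ω - g (W ω)) Z μ :=
    hindep.comp (φ := fun p : β × ℝ ↦ p.2 - g p.1) (by fun_prop) measurable_id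
  have h_err (ω : Ω) : X ω + Z ω - g (W ω) = X ω - g (W ω) + Z ω := by ring
  rw [← integral_add_sq_of_indepFun hX_sq hZ_sq h_err_indep hZ_mean]
  simp_rw [← h_err]
  refine le_integral_sub_sq_of_le_condDiffEnt hW (hX.add hZ) hg
    (condDistrib_add_absolutelyContinuous hW.aemeasurable hX hZ hindep hZ_ac) ?_ hv h_ent
  simp_rw [h_err]
  exact hX_sq.add hZ_sq

lemma le_integral_sub_sq_of_le_condDiffEnt_add_gaussianReal {X Z : Ω → ℝ} {t : ℝ}
    (hW : Measurable W) (hX : AEMeasurable X μ) (hg : Measurable g)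
    (hindep : IndepFun (fun ω ↦ (W ω, X ω)) Z μ) (hZ : HasLaw Z (gaussianReal 0 1) μ)
    (hX_sq : MemLp (fun ω ↦ X ω - g (W ω)) 2 μ) (ht : 0 ≤ t)
    (h_ent : 1 / 2 * Real.logb 2 (2 * π * Real.exp 1 * (1 + t))
      ≤ condDiffEnt μ (fun ω ↦ X ω + Z ω) W) :
    t ≤ ∫ ω, (X ω - g (W ω)) ^ 2 ∂μ := by
  lift t to ℝ≥0 using ht
  have hZ_mean : ∫ ω, Z ω ∂μ = 0 := hZ.integral_eq.trans integral_id_gaussianReal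
  have hZ_var : ∫ ω, Z ω ^ 2 ∂μ = 1 := by
    rw [← variance_of_integral_eq_zero hZ.aemeasurable hZ_mean, hZ.variance_eq,
      variance_id_gaussianReal, NNReal.coe_one]
  have hZ_sq : MemLp Z 2 μ :=
    (hZ.map_eq ▸ memLp_id_gaussianReal 2 : MemLp id 2 (μ.map Z)).comp_of_map hZ.aemeasurable
  have hZ_ac : μ.map Z ≪ volume := hZ.map_eq ▸ gaussianReal_absolutelyContinuous 0 one_ne_zero
  have hv : 1 ≤ 2 * π * ((1 + t : ℝ≥0) : ℝ) := by
    push_cast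
    nlinarith [Real.pi_gt_three, t.coe_nonneg]
  have h_est := le_integral_sub_sq_add_of_le_condDiffEnt_add hW hX hZ.aemeasurable hg hindep hZ_ac
    hX_sq hZ_sq hZ_mean hv (mod_cast h_ent)
  rw [hZ_var, NNReal.coe_add, NNReal.coe_one] at h_est
  linarith

end Estimation

theorem cov_le_of_condEntropy_general {Ω 𝒰 : Type*} [MeasurableSpace Ω] [MeasurableSpace 𝒰]
    (μ : Measure Ω) [IsProbabilityMeasure μ]
    (U : Ω → 𝒰) (X1 X2 Z1 : Ω → ℝ)
    (hU : Measurable U) (hX1 : Measurable X1) (hX2 : Measurable X2) (hZ1 : Measurable Z1)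
    (P1 P2 : ℝ) (hX1sq : MemLp X1 2 μ) (hX2sq : MemLp X2 2 μ)
    (hX1pow : ∫ ω, X1 ω ^ 2 ∂μ ≤ P1) (hX2pow : ∫ ω, X2 ω ^ 2 ∂μ ≤ P2)
    (hZ1law : μ.map Z1 = gaussianReal 0 1)
    (hindep : IndepFun Z1 (fun ω ↦ (U ω, X1 ω, X2 ω)) μ)
    (α : ℝ) (hα0 : 0 ≤ α)
    (hent : 1 / 2 * Real.logb 2 (2 * π * Real.exp 1 * (1 + α * P1))
      ≤ condDiffEnt μ (fun ω ↦ X1 ω + Z1 ω) (fun ω ↦ (U ω, X2 ω))) :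
    |∫ ω, X1 ω * X2 ω ∂μ| ≤ √((1 - α) * P1 * P2) := by
  have hP1 : 0 ≤ P1 := (integral_nonneg fun ω ↦ sq_nonneg (X1 ω)).trans hX1pow
  have hindep' : IndepFun (fun ω ↦ ((U ω, X2 ω), X1 ω)) Z1 μ :=
    hindep.symm.comp (φ := fun p ↦ ((p.1, p.2.2), p.2.1)) (by fun_prop) measurable_id
  have h_mmse (c : ℝ) : α * P1 ≤ ∫ ω, (X1 ω - c * X2 ω) ^ 2 ∂μ :=
    le_integral_sub_sq_of_le_condDiffEnt_add_gaussianReal (g := fun p ↦ c * p.2)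
      (hU.prodMk hX2) hX1.aemeasurable (by fun_prop) hindep' ⟨hZ1.aemeasurable, hZ1law⟩
      (hX1sq.sub (hX2sq.const_mul c)) (mul_nonneg hα0 hP1) hent
  have h_slack : α * P1 ≤ P1 := by simpa using (h_mmse 0).trans (by simpa using hX1pow)
  refine Real.abs_le_sqrt ?_
  calc (∫ ω, X1 ω * X2 ω ∂μ) ^ 2
    _ ≤ (∫ ω, X1 ω ^ 2 ∂μ - α * P1) * ∫ ω, X2 ω ^ 2 ∂μ :=
      sq_integral_mul_le_of_forall_le_integral_sub_sq hX1sq hX2sq h_mmse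
    _ ≤ ((1 - α) * P1) * P2 :=
      mul_le_mul (by linarith) hX2pow (integral_nonneg fun ω ↦ sq_nonneg _) (by linarith)

/-- **Lemma (covariance bound from the conditional-entropy constraint).**
If `X₁, X₂` are zero-mean with `E[X₁²] ≤ P₁`, `E[X₂²] ≤ P₂`, `Z₁ ~ N(0,1)` is
independent of `(U, X₁, X₂)`, and `h(X₁ + Z₁ | U, X₂) = ½ log(2πe(1 + αP₁))` for
some `α ∈ [0,1]`, then `E[X₁X₂] ≤ √((1−α)P₁P₂)`. -/
theorem cov_le_of_condEntropy {Ω 𝒰 : Type*} [MeasurableSpace Ω] [MeasurableSpace 𝒰]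
    (μ : Measure Ω) [IsProbabilityMeasure μ]
    (U : Ω → 𝒰) (X1 X2 Z1 : Ω → ℝ)
    (hU : Measurable U) (hX1 : Measurable X1) (hX2 : Measurable X2) (hZ1 : Measurable Z1)
    (P1 P2 : ℝ) (hP1 : 0 < P1) (hP2 : 0 < P2)
    (hX1sq : MemLp X1 2 μ) (hX2sq : MemLp X2 2 μ)
    (hX1mean : (∫ ω, X1 ω ∂μ) = 0) (hX2mean : (∫ ω, X2 ω ∂μ) = 0)
    (hX1pow : (∫ ω, (X1 ω) ^ 2 ∂μ) ≤ P1) (hX2pow : (∫ ω, (X2 ω) ^ 2 ∂μ) ≤ P2)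
    (hZ1law : Measure.map Z1 μ = gaussianReal 0 1)
    (hindep : IndepFun Z1 (fun ω => (U ω, X1 ω, X2 ω)) μ)
    (α : ℝ) (hα0 : 0 ≤ α) (hα1 : α ≤ 1)
    (hent : condDiffEnt μ (fun ω => X1 ω + Z1 ω) (fun ω => (U ω, X2 ω))
      = (1 / 2) * Real.logb 2 (2 * Real.pi * Real.exp 1 * (1 + α * P1))) :
    (∫ ω, X1 ω * X2 ω ∂μ) ≤ Real.sqrt ((1 - α) * P1 * P2) :=
  (le_abs_self _).trans (cov_le_of_condEntropy_general μ U X1 X2 Z1 hU hX1 hX2 hZ1 P1 P2 hX1sq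
    hX2sq hX1pow hX2pow hZ1law hindep α hα0 hent.ge)
end
end
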